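/- Suppose Ω = U_Ω Σ_Ω V_Ωᵀ where U_Ω ∈ ℝ^{(d_x+d_u) × (d_x+d_u)} and V_Ω ∈ ℝ^{n × n} are orthogonal matrices and Σ_Ω ∈ ℝ^{(d_x+d_u) × n}, suppose Ω Ωᵀ is invertible, and suppose E_x ∈ ℝ^{r_x × d_x} has full row rank r_x. Then the unique minimizer G = E_x Y Ωᵀ E_{xu}ᵀ (E_{xu} Ω Ωᵀ E_{xu}ᵀ)⁻¹ of L_pred(E_x, ·) satisfies G = lim_{ε → 0} E_x Y V_Ω (Σ_Ωᵀ U_Ωᵀ E_{xu}ᵀ E_{xu} U_Ω Σ_Ω + ε² I_n)⁻¹ Σ_Ωᵀ U_Ωᵀ E_{xu}ᵀ, where the limit is taken along nonzero real ε. -/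

import Mathlib

open Matrix

/-- Squared Frobenius norm of a real matrix. -/
noncomputable def frobSq {m n : Type*} [Fintype m] [Fintype n] (M : Matrix m n ℝ) : ℝ :=
  ∑ i, ∑ j, (M i j) ^ 2

/-- The augmented block-diagonal matrix `E_{xu}` with blocks `E_x` and `I_{d_u}`. -/
def Exu {d_x d_u r_x : ℕ} (Ex : Matrix (Fin r_x) (Fin d_x) ℝ) :
    Matrix (Fin r_x ⊕ Fin d_u) (Fin d_x ⊕ Fin d_u) ℝ :=
  Matrix.fromBlocks Ex 0 0 1

/-- The prediction loss `L_pred(E_x, G) = (1/n) ‖E_x Y − G E_{xu} Ω‖_F²`. -/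
noncomputable def Lpred {d_x d_u r_x n : ℕ}
    (Y : Matrix (Fin d_x) (Fin n) ℝ) (Ω : Matrix (Fin d_x ⊕ Fin d_u) (Fin n) ℝ)
    (Ex : Matrix (Fin r_x) (Fin d_x) ℝ)
    (G : Matrix (Fin r_x) (Fin r_x ⊕ Fin d_u) ℝ) : ℝ :=
  (1 / (n : ℝ)) * frobSq (Ex * Y - G * Exu (d_u := d_u) Ex * Ω)

open Filter

/-!
Put `M = E_{xu} U_Ω Σ_Ω`. Orthogonality of `V_Ω` gives `E_{xu} Ω = M V_Ωᵀ`, so the claim is the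
Tikhonov limit `(Mᵀ M + ε² I)⁻¹ Mᵀ → Mᵀ (M Mᵀ)⁻¹`. The push-through identity
`(Mᵀ M + t I)⁻¹ Mᵀ = Mᵀ (M Mᵀ + t I)⁻¹` moves the regularization from the possibly singular
`Mᵀ M` to `M Mᵀ`, which is invertible, and there the limit is continuity of inversion.
-/

section PushThrough

variable {m n R : Type*} [Fintype m] [Fintype n] [DecidableEq m] [DecidableEq n] [CommRing R]

theorem isUnit_mul_add_smul_one_comm (A : Matrix m n R) (B : Matrix n m R) {t : R}
    (ht : IsUnit t) :
    IsUnit (A * B + t • (1 : Matrix m m R)) ↔ IsUnit (B * A + t • (1 : Matrix n n R)) := by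
  obtain ⟨u, rfl⟩ := ht
  have hAB : A * B + (u : R) • 1 = u • (A * (u⁻¹ • B) + 1) := by
    simp [Units.smul_def, smul_smul]
  have hBA : B * A + (u : R) • 1 = u • ((u⁻¹ • B) * A + 1) := by
    simp [Units.smul_def, smul_smul]
  rw [hAB, hBA, isUnit_smul_iff, isUnit_smul_iff, isUnit_iff_isUnit_det, isUnit_iff_isUnit_det,
    det_mul_add_one_comm]

theorem inv_mul_add_smul_one_mul (A : Matrix m n R) (B : Matrix n m R) {t : R} (ht : IsUnit t)
    (h : IsUnit (A * B + t • (1 : Matrix m m R))) :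
    (B * A + t • (1 : Matrix n n R))⁻¹ * B = B * (A * B + t • (1 : Matrix m m R))⁻¹ := by
  have hAB := (isUnit_iff_isUnit_det _).mp h
  have hBA := (isUnit_iff_isUnit_det _).mp ((isUnit_mul_add_smul_one_comm A B ht).mp h)
  have intertwine : (B * A + t • (1 : Matrix n n R)) * B = B * (A * B + t • 1) := by
    simp [Matrix.add_mul, Matrix.mul_add, Matrix.mul_assoc]
  calc (B * A + t • (1 : Matrix n n R))⁻¹ * B
      = (B * A + t • 1)⁻¹ * (B * (A * B + t • 1)) * (A * B + t • 1)⁻¹ := by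
        rw [Matrix.mul_assoc, mul_nonsing_inv_cancel_right _ _ hAB]
    _ = B * (A * B + t • 1)⁻¹ := by
        rw [← intertwine, nonsing_inv_mul_cancel_left _ _ hBA]

end PushThrough

section TikhonovLimit

open scoped Topology

variable {m n 𝕜 : Type*} [Fintype m] [DecidableEq m] [Fintype n] [DecidableEq n]
  [Field 𝕜] [TopologicalSpace 𝕜] [IsTopologicalRing 𝕜]

theorem continuousAt_matrix_inv_of_isUnit [ContinuousInv₀ 𝕜] {A : Matrix m m 𝕜}
    (hA : IsUnit A) : ContinuousAt Inv.inv A := by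
  refine continuousAt_matrix_inv A ?_
  rw [Ring.inverse_eq_inv']
  exact continuousAt_inv₀ ((isUnit_iff_isUnit_det A).mp hA).ne_zero

theorem eventually_nhds_isUnit_matrix [T1Space 𝕜] {A : Matrix m m 𝕜} (hA : IsUnit A) :
    ∀ᶠ B in 𝓝 A, IsUnit B := by
  simp only [isUnit_iff_isUnit_det, isUnit_iff_ne_zero] at hA ⊢
  exact (Continuous.matrix_det continuous_id).continuousAt.eventually_ne hA

theorem tendsto_inv_mul_add_smul_one_mul [ContinuousInv₀ 𝕜] [T1Space 𝕜]
    (A : Matrix m n 𝕜) (B : Matrix n m 𝕜) (h : IsUnit (A * B)) :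
    Tendsto (fun t : 𝕜 => (B * A + t • (1 : Matrix n n 𝕜))⁻¹ * B) (𝓝[≠] 0)
      (𝓝 (B * (A * B)⁻¹)) := by
  have regularized : Tendsto (fun t : 𝕜 => A * B + t • (1 : Matrix m m 𝕜)) (𝓝[≠] 0)
      (𝓝 (A * B)) := by
    have hcont : Continuous fun t : 𝕜 => A * B + t • (1 : Matrix m m 𝕜) := by fun_prop
    exact (hcont.tendsto' 0 _ (by simp)).mono_left nhdsWithin_le_nhds
  have right_limit : Tendsto (fun t : 𝕜 => B * (A * B + t • (1 : Matrix m m 𝕜))⁻¹) (𝓝[≠] 0)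
      (𝓝 (B * (A * B)⁻¹)) := by
    have hcont : Continuous fun Z : Matrix m m 𝕜 => B * Z := by fun_prop
    exact (hcont.tendsto _).comp ((continuousAt_matrix_inv_of_isUnit h).tendsto.comp regularized)
  refine right_limit.congr' ?_
  filter_upwards [regularized.eventually (eventually_nhds_isUnit_matrix h), self_mem_nhdsWithin]
    with t hunit ht
  exact (inv_mul_add_smul_one_mul A B (IsUnit.mk0 t ht) hunit).symm

theorem minimizer_as_limit_general {k l p : Type*} [Fintype k] [Fintype l]
    [ContinuousInv₀ 𝕜] [T1Space 𝕜]
    (X : Matrix p n 𝕜) (E : Matrix m l 𝕜) (U : Matrix l k 𝕜) (S : Matrix k n 𝕜)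
    {V : Matrix n n 𝕜} {Ω : Matrix l n 𝕜} (hV : Vᵀ * V = 1) (hΩ : Ω = U * S * Vᵀ)
    (hE : IsUnit (E * Ω * Ωᵀ * Eᵀ)) :
    Tendsto
      (fun ε : 𝕜 => X * V * (Sᵀ * Uᵀ * Eᵀ * E * U * S + ε ^ 2 • (1 : Matrix n n 𝕜))⁻¹ *
        Sᵀ * Uᵀ * Eᵀ)
      (𝓝[≠] 0) (𝓝 (X * Ωᵀ * Eᵀ * (E * Ω * Ωᵀ * Eᵀ)⁻¹)) := by
  let M := E * U * S
  have gram : E * Ω * Ωᵀ * Eᵀ = M * Mᵀ := by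
    calc E * Ω * Ωᵀ * Eᵀ = M * (Vᵀ * V) * Mᵀ := by
          simp only [M, hΩ, transpose_mul, transpose_transpose, Matrix.mul_assoc]
      _ = M * Mᵀ := by rw [hV, Matrix.mul_one]
  have cross : X * Ωᵀ * Eᵀ = X * V * Mᵀ := by
    simp only [M, hΩ, transpose_mul, transpose_transpose, Matrix.mul_assoc]
  have square : Tendsto (fun ε : 𝕜 => ε ^ 2) (𝓝[≠] 0) (𝓝[≠] 0) :=
    tendsto_nhdsWithin_iff.mpr
      ⟨((continuous_pow 2).tendsto' 0 0 (by simp)).mono_left nhdsWithin_le_nhds,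
        eventually_mem_nhdsWithin.mono fun _ => pow_ne_zero 2⟩
  have mul_left : Continuous fun Z : Matrix n m 𝕜 => X * V * Z := by fun_prop
  have limit := (mul_left.tendsto _).comp
    ((tendsto_inv_mul_add_smul_one_mul M Mᵀ (gram ▸ hE)).comp square)
  rw [gram, cross]
  simpa only [M, Function.comp_def, transpose_mul, Matrix.mul_assoc] using limit

end TikhonovLimit

section FullRowRank

variable {k l m n R : Type*}

theorem fromBlocks_zero_zero_mulVec_surjective [Finite m] [Finite k] [Fintype n] [Fintype l]
    [CommRing R] {A : Matrix m n R} {D : Matrix k l R} (hA : Function.Surjective A.mulVec)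
    (hD : Function.Surjective D.mulVec) :
    Function.Surjective (fromBlocks A 0 0 D).mulVec := by
  classical
  obtain ⟨A', hA'⟩ := mulVec_surjective_iff_exists_right_inverse.mp hA
  obtain ⟨D', hD'⟩ := mulVec_surjective_iff_exists_right_inverse.mp hD
  refine mulVec_surjective_iff_exists_right_inverse.mpr ⟨fromBlocks A' 0 0 D', ?_⟩
  simp [fromBlocks_multiply, hA', hD']

variable [Fintype m] [Fintype n] [Field R]

theorem rank_eq_card_iff_mulVec_surjective {A : Matrix m n R} :
    A.rank = Fintype.card m ↔ Function.Surjective A.mulVec := by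
  rw [Matrix.rank, ← Module.finrank_fintype_fun_eq_card R, ← coe_mulVecLin,
    ← LinearMap.range_eq_top]
  exact ⟨Submodule.eq_top_of_finrank_eq, fun h => by rw [h, finrank_top]⟩

variable [LinearOrder R] [IsStrictOrderedRing R]

theorem isUnit_self_mul_transpose_iff_mulVec_surjective [DecidableEq m] {A : Matrix m n R} :
    IsUnit (A * Aᵀ) ↔ Function.Surjective A.mulVec := by
  rw [← mulVec_surjective_iff_isUnit, ← rank_eq_card_iff_mulVec_surjective,
    ← rank_eq_card_iff_mulVec_surjective, rank_self_mul_transpose]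

theorem isUnit_mul_self_mul_transpose_mul_transpose [DecidableEq m] [Fintype k] [DecidableEq k]
    {A : Matrix m n R} {E : Matrix k m R}
    (hA : IsUnit (A * Aᵀ)) (hE : Function.Surjective E.mulVec) :
    IsUnit (E * A * Aᵀ * Eᵀ) := by
  have hEA : Function.Surjective (E * A).mulVec := by
    simpa only [Function.comp_def, mulVec_mulVec] using
      hE.comp (isUnit_self_mul_transpose_iff_mulVec_surjective.mp hA)
  simpa only [transpose_mul, Matrix.mul_assoc] using
    isUnit_self_mul_transpose_iff_mulVec_surjective.mpr hEA

theorem Exu_mulVec_surjective {d_x d_u r_x : ℕ} {Ex : Matrix (Fin r_x) (Fin d_x) ℝ}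
    (hEx : Ex.rank = r_x) : Function.Surjective (Exu (d_u := d_u) Ex).mulVec :=
  fromBlocks_zero_zero_mulVec_surjective
    (rank_eq_card_iff_mulVec_surjective.mp (hEx.trans (Fintype.card_fin r_x).symm))
    (mulVec_surjective_iff_isUnit.mpr isUnit_one)

end FullRowRank

/-- Under a full SVD `Ω = U_Ω Σ_Ω V_Ωᵀ`, invertibility of `Ω Ωᵀ`, and full row rank of
`E_x`, the unique minimizer `G = E_x Y Ωᵀ E_{xu}ᵀ (E_{xu} Ω Ωᵀ E_{xu}ᵀ)⁻¹` of
`L_pred(E_x, ·)` equals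
`lim_{ε → 0} E_x Y V_Ω (Σ_Ωᵀ U_Ωᵀ E_{xu}ᵀ E_{xu} U_Ω Σ_Ω + ε² I_n)⁻¹ Σ_Ωᵀ U_Ωᵀ E_{xu}ᵀ`. -/
theorem minimizer_as_limit (d_x d_u r_x n : ℕ)
    (hdx : 0 < d_x) (hdu : 0 < d_u) (hrx : 0 < r_x) (hn : 0 < n) (hrd : r_x ≤ d_x)
    (Y : Matrix (Fin d_x) (Fin n) ℝ) (Ω : Matrix (Fin d_x ⊕ Fin d_u) (Fin n) ℝ)
    (U : Matrix (Fin d_x ⊕ Fin d_u) (Fin d_x ⊕ Fin d_u) ℝ)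
    (S : Matrix (Fin d_x ⊕ Fin d_u) (Fin n) ℝ)
    (V : Matrix (Fin n) (Fin n) ℝ)
    (hU : Uᵀ * U = 1) (hV : Vᵀ * V = 1) (hSVD : Ω = U * S * Vᵀ)
    (hΩ : IsUnit (Ω * Ωᵀ))
    (Ex : Matrix (Fin r_x) (Fin d_x) ℝ) (hEx : Ex.rank = r_x) :
    Tendsto
      (fun ε : ℝ =>
        Ex * Y * V *
          (Sᵀ * Uᵀ * (Exu (d_u := d_u) Ex)ᵀ * Exu (d_u := d_u) Ex * U * S +
            ε ^ 2 • (1 : Matrix (Fin n) (Fin n) ℝ))⁻¹ * Sᵀ * Uᵀ * (Exu (d_u := d_u) Ex)ᵀ)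
      (nhdsWithin 0 {(0 : ℝ)}ᶜ)
      (nhds (Ex * Y * Ωᵀ * (Exu (d_u := d_u) Ex)ᵀ *
        (Exu (d_u := d_u) Ex * Ω * Ωᵀ * (Exu (d_u := d_u) Ex)ᵀ)⁻¹)) :=
  minimizer_as_limit_general (Ex * Y) (Exu Ex) U S hV hSVD
    (isUnit_mul_self_mul_transpose_mul_transpose hΩ (Exu_mulVec_surjective hEx))
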